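/- Assume the alphabet 𝒲₁ is finite (so Σ is a compact two-sided subshift of finite type) and T_𝔰 is topologically transitive. Let f∈𝓗₊, and let c be slowly increasing and such that F(φ*)[t] := lim_N ⟨φ_{c;≤N}[t]∗_ρ f, φ*_{c;≤N}[t]∗_ρ f⟩ satisfies F(φ*)[t]→∞ as t↓γ(f) and (lim_N ⟨φ_{c;≤N}[t]∗_ρ f, f⟩)/F(φ*)[t] → 0 as t↓γ(f). For t>γ(f) let μ_c[t] be the weak* limit as N→∞ of the measures μ_{c;N}[t] on Σ defined below. Then any weak* accumulation point μ of (μ_c[t_k])_k along a sequence t_k↓γ(f) is σ-invariant. -/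

import Mathlib

open scoped ENNReal NNReal BigOperators
open Filter MeasureTheory

namespace CMS

variable {W : Type*} {G : Type*}

/-- One-sided countable Markov shift determined by the transition matrix `τ`. -/
def SigmaPlus (τ : W → W → Prop) : Set (ℕ → W) :=
  {x | ∀ i, τ (x i) (x (i + 1))}

/-- Two-sided shift space determined by the transition matrix `τ`. -/
def SigmaZ (τ : W → W → Prop) : Set (ℤ → W) :=
  {x | ∀ i, τ (x i) (x (i + 1))}

/-- The left shift on one-sided sequences. -/
def shift (x : ℕ → W) : ℕ → W := fun i => x (i + 1)

/-- The left shift on two-sided sequences. -/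
def shiftZ (x : ℤ → W) : ℤ → W := fun i => x (i + 1)

/-- `weight R n x = R(x) R(σ x) ⋯ R(σ^{n-1} x)`, the multiplicative Birkhoff weight `R_n`. -/
noncomputable def weight (R : (ℕ → W) → ℝ) (n : ℕ) (x : ℕ → W) : ℝ :=
  ∏ i ∈ Finset.range n, R (shift^[i] x)

/-- A finite word occurs somewhere inside a point of `Σ⁺`: admissibility. -/
def Occurs (τ : W → W → Prop) (w : List W) : Prop :=
  ∃ x ∈ SigmaPlus τ, ∃ k : ℕ, ∀ i : Fin w.length, x (k + i) = w.get i

/-- `𝒲_n^{B,b}` : admissible words of length `n`, first letter `B`, last letter `b`. -/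
def WordSet (τ : W → W → Prop) (n : ℕ) (B b : W) : Set (List W) :=
  {w | w.length = n ∧ Occurs τ w ∧ w.head? = some B ∧ w.getLast? = some b}

/-- Same, with admissibility given by consecutive allowed transitions
(as used for subshifts of finite type). -/
def WordSetC (τ : W → W → Prop) (n : ℕ) (B b : W) : Set (List W) :=
  {w | w.length = n ∧ w.Chain' τ ∧ w.head? = some B ∧ w.getLast? = some b}

/-- Concatenation `w x` of a finite word with a one-sided point. -/
def cat (w : List W) (x : ℕ → W) : ℕ → W := fun i =>
  if h : i < w.length then w.get ⟨i, h⟩ else x (i - w.length)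

/-- `𝔰̲(w) = 𝔰(w₁)⋯𝔰(w_n)`. -/
def wprod [Monoid G] (s : W → G) (w : List W) : G := (w.map s).prod

/-- Topological mixing of a countable Markov shift, stated combinatorially. -/
def Mixing (τ : W → W → Prop) : Prop :=
  ∀ B b : W, ∃ N : ℕ, ∀ n, N ≤ n → (WordSet τ n B b).Nonempty

/-- `log R` is locally Hölder with constants `C₀`, `θ`. -/
def LocallyHolder (τ : W → W → Prop) (R : (ℕ → W) → ℝ) (C₀ θ : ℝ) : Prop :=
  0 < C₀ ∧ 0 < θ ∧ θ < 1 ∧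
    ∀ x ∈ SigmaPlus τ, ∀ y ∈ SigmaPlus τ, ∀ n : ℕ, 2 ≤ n →
      (∀ i < n, x i = y i) → |Real.log (R x) - Real.log (R y)| ≤ C₀ * θ ^ n

/-- `Σ_{x∈[B], σⁿx=x} R_n(x)`. -/
noncomputable def Zper (τ : W → W → Prop) (R : (ℕ → W) → ℝ) (B : W) (n : ℕ) : ℝ≥0∞ :=
  ∑' p : {x : ℕ → W // x ∈ SigmaPlus τ ∧ shift^[n] x = x ∧ x 0 = B},
    ENNReal.ofReal (weight R n p.1)

/-- First-return version: `Σ {R_n(x) : x∈[B], σⁿx=x, x_i ≠ B for 0<i<n}`. -/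
noncomputable def ZperFR (τ : W → W → Prop) (R : (ℕ → W) → ℝ) (B : W) (n : ℕ) : ℝ≥0∞ :=
  ∑' p : {x : ℕ → W // x ∈ SigmaPlus τ ∧ shift^[n] x = x ∧ x 0 = B ∧
      ∀ i, 0 < i → i < n → x i ≠ B},
    ENNReal.ofReal (weight R n p.1)

/-- Periodic sums for the group extension, restricted to orbits whose
group displacement `𝔰̲(x₀⋯x_{n-1})` lies in `C`. -/
noncomputable def ZperExt [Monoid G] (τ : W → W → Prop) (R : (ℕ → W) → ℝ)
    (s : W → G) (C : Set G) (B : W) (n : ℕ) : ℝ≥0∞ :=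
  ∑' p : {x : ℕ → W // x ∈ SigmaPlus τ ∧ shift^[n] x = x ∧ x 0 = B ∧
      (List.ofFn fun i : Fin n => s (x i)).prod ∈ C},
    ENNReal.ofReal (weight R n p.1)

/-- Exponential growth rate `limsup Z_n^{1/n}`; equals `exp` of the Gurevič pressure. -/
noncomputable def growthRate (Z : ℕ → ℝ≥0∞) : ℝ≥0∞ :=
  Filter.limsup (fun n => Z n ^ (1 / (n : ℝ))) Filter.atTop

/-- positive recurrence of `R` in the sense of Sarig. -/
def PositiveRecurrent (τ : W → W → Prop) (R : (ℕ → W) → ℝ) : Prop :=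
  ∀ B : W, ∃ M : ℝ, 1 ≤ M ∧ ∀ n : ℕ, 1 ≤ n →
    (ENNReal.ofReal M)⁻¹ ≤ Zper τ R B n ∧ Zper τ R B n ≤ ENNReal.ofReal M

/-- Topological transitivity of the group extension `T_𝔰`, stated combinatorially. -/
def ExtTransitive [Group G] (τ : W → W → Prop) (s : W → G) : Prop :=
  ∀ B b : W, ∀ g : G, ∃ n : ℕ, ∃ w ∈ WordSet τ n B b, wprod s w = g

/-- Topological transitivity of the quotient extension `T_{𝔰_H}`. -/
def ExtTransitiveQ [Group G] (τ : W → W → Prop) (s : W → G) (H : Subgroup G) : Prop :=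
  ∀ B b : W, ∀ q : G ⧸ H, ∃ n : ℕ, ∃ w ∈ WordSet τ n B b,
    (QuotientGroup.mk (wprod s w) : G ⧸ H) = q

/-- The permutation of the canonical basis (indexed by the cosets in a countable
direct sum of quotients `G⧸H_j`) induced by a group element. -/
def rhoIdx [Group G] {J : Type*} (Hfam : J → Subgroup G) (g : G)
    (i : Σ j, G ⧸ Hfam j) : Σ j, G ⧸ Hfam j :=
  ⟨i.1, g • i.2⟩

/-- The convolution `φ ∗_ρ f = Σ_h φ(h) ρ(h) f`, in coordinates, where the
representation `ρ` permutes the basis indexed by `I` via `act`. -/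
noncomputable def convE {I : Type*} [Group G] (act : G → I → I)
    (φ : G → ℝ≥0∞) (f : I → ℝ≥0∞) : I → ℝ≥0∞ :=
  fun i => ∑' h : G, φ h * f (act h⁻¹ i)

/-- inner product of two nonnegative-cone vectors, in coordinates. -/
noncomputable def innerE {I : Type*} (u v : I → ℝ≥0∞) : ℝ≥0∞ := ∑' i, u i * v i

noncomputable def normSqE {I : Type*} (u : I → ℝ≥0∞) : ℝ≥0∞ := innerE u u

/-- membership in the Hilbert space (finite ℓ² norm): together with
nonnegativity of coordinates this is membership in the cone `𝓗₊`. -/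
def MemL2 {I : Type*} (f : I → ℝ≥0∞) : Prop := normSqE f < ⊤

/-- `φ*(g) = φ(g⁻¹)`. -/
def phiStar [Group G] (φ : G → ℝ≥0∞) : G → ℝ≥0∞ := fun g => φ g⁻¹

/-- The partial thermodynamic `G`-density
`φ^{B,a}_{c;≤N}[t](g) = Σ_{n=1}^N t^{-n} c_n Σ{R_n(wx) : w ∈ 𝒲_n^{B,a}, 𝔰̲(w)=g}`. -/
noncomputable def phiLe [Group G] (τ : W → W → Prop) (R : (ℕ → W) → ℝ) (s : W → G)
    (B a : W) (x : ℕ → W) (c : ℕ → ℝ) (t : ℝ) (N : ℕ) (g : G) : ℝ≥0∞ :=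
  ∑ n ∈ Finset.Icc 1 N, (ENNReal.ofReal t)⁻¹ ^ n * ENNReal.ofReal (c n) *
    ∑' w : {w : List W // w ∈ WordSet τ n B a ∧ wprod s w = g},
      ENNReal.ofReal (weight R n (cat w.1 x))

/-- Same with chain-admissibility (for subshifts of finite type). -/
noncomputable def phiLeC [Group G] (τ : W → W → Prop) (R : (ℕ → W) → ℝ) (s : W → G)
    (B a : W) (x : ℕ → W) (c : ℕ → ℝ) (t : ℝ) (N : ℕ) (g : G) : ℝ≥0∞ :=
  ∑ n ∈ Finset.Icc 1 N, (ENNReal.ofReal t)⁻¹ ^ n * ENNReal.ofReal (c n) *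
    ∑' w : {w : List W // w ∈ WordSetC τ n B a ∧ wprod s w = g},
      ENNReal.ofReal (weight R n (cat w.1 x))

/-- `γ(φ ∗_ρ f)`, the decay exponent for `f`. -/
noncomputable def gammaNorm {I : Type*} [Group G] (act : G → I → I)
    (τ : W → W → Prop) (R : (ℕ → W) → ℝ) (s : W → G) (A a : W) (x : ℕ → W)
    (f : I → ℝ≥0∞) : ℝ :=
  sInf {t : ℝ | 0 < t ∧
    (⨆ N, normSqE (convE act (phiLe τ R s A a x (fun _ => 1) t N) f)) < ⊤}

/-- `γ(f)`, defined through `⟨φ_{≤N}[t] ∗_ρ f, f⟩`. -/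
noncomputable def gammaInner {I : Type*} [Group G] (act : G → I → I)
    (τ : W → W → Prop) (R : (ℕ → W) → ℝ) (s : W → G) (A a : W) (x : ℕ → W)
    (f : I → ℝ≥0∞) : ℝ :=
  sInf {t : ℝ | 0 < t ∧
    (⨆ N, innerE (convE act (phiLe τ R s A a x (fun _ => 1) t N) f) f) < ⊤}

/-- `γ(φ* ∗_ρ f)`, defined through `⟨φ_{≤N}[t] ∗_ρ f, φ*_{≤N}[t] ∗_ρ f⟩`. -/
noncomputable def gammaPairStar {I : Type*} [Group G] (act : G → I → I)
    (τ : W → W → Prop) (R : (ℕ → W) → ℝ) (s : W → G) (A a : W) (x : ℕ → W)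
    (f : I → ℝ≥0∞) : ℝ :=
  sInf {t : ℝ | 0 < t ∧
    (⨆ N, innerE (convE act (phiLe τ R s A a x (fun _ => 1) t N) f)
      (convE act (phiStar (phiLe τ R s A a x (fun _ => 1) t N)) f)) < ⊤}

/-- Left translation action on `G` (for the left regular representation). -/
def leftMul (G : Type*) [Group G] : G → G → G := fun g x => g * x

/-- `δ_e`, the indicator of the identity. -/
noncomputable def deltaE (G : Type*) [Group G] : G → ℝ≥0∞ :=
  Set.indicator {(1 : G)} fun _ => (1 : ℝ≥0∞)

/-- The representation determined by the index action `act` has almost invariant vectors,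
i.e. weakly contains the trivial representation. -/
def HasAlmostInvariantVectors {I : Type*} [Group G] (act : G → I → I) : Prop :=
  ∀ F : Finset G, ∀ ε : ℝ, 0 < ε → ∃ v : I → ℝ,
    Summable (fun i => v i ^ 2) ∧ (∑' i, v i ^ 2) = 1 ∧
      ∀ g ∈ F, (∑' i, (v (act g⁻¹ i) - v i) ^ 2) ≤ ε ^ 2

/-- Amenability of a countable discrete group, via almost invariant vectors of
the left regular representation. -/
def Amenable (G : Type*) [Group G] : Prop :=
  HasAlmostInvariantVectors (leftMul G)

/-- Slowly increasing function. -/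
def SlowlyIncreasing (c : ℕ → ℝ) : Prop :=
  (∀ n, 0 < c n) ∧ Monotone c ∧ Tendsto c atTop atTop ∧
    ∀ k : ℕ, Tendsto (fun n => c (n + k) / c n) atTop (nhds 1)

/-- Cylinder set `[w]` in `Σ⁺`. -/
def cylP (τ : W → W → Prop) (w : List W) : Set {x : ℕ → W // x ∈ SigmaPlus τ} :=
  {x | ∀ i : Fin w.length, x.1 i = w.get i}

/-- `w ∧ x`: the number of initial coordinates in which a word agrees
with a one-sided point. -/
noncomputable def agreeLen (w : List W) (x : ℕ → W) : ℕ :=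
  sSup {k | w.take k = (List.range k).map x}

/-- The shift on the one-sided shift space. -/
def shiftPS (τ : W → W → Prop) (x : {y : ℕ → W // y ∈ SigmaPlus τ}) :
    {y : ℕ → W // y ∈ SigmaPlus τ} :=
  ⟨shift x.1, fun i => x.2 (i + 1)⟩

/-- The shift on the two-sided shift space. -/
def shiftZS (τ : W → W → Prop) (x : {y : ℤ → W // y ∈ SigmaZ τ}) :
    {y : ℤ → W // y ∈ SigmaZ τ} :=
  ⟨shiftZ x.1, fun i => x.2 (i + 1)⟩

/-- Negative-coordinate cylinder `[w.]` in the two-sided shift. -/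
def negCyl (τ : W → W → Prop) (w : List W) : Set {x : ℤ → W // x ∈ SigmaZ τ} :=
  {x | ∀ i : Fin w.length, x.1 (-(w.length : ℤ) + (i : ℕ)) = w.get i}


/-- chain-admissibility version of `γ(f)`. -/
noncomputable def gammaInnerC' {W G : Type*} {I : Type*} [Group G] (act : G → I → I)
    (τ : W → W → Prop) (R : (ℕ → W) → ℝ) (s : W → G) (A a : W) (x : ℕ → W)
    (f : I → ℝ≥0∞) : ℝ :=
  sInf {t : ℝ | 0 < t ∧
    (⨆ N, innerE (convE act (phiLeC τ R s A a x (fun _ => 1) t N) f) f) < ⊤}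

/-- The normalising factor `F(φ*)[t] = lim_N ⟨φ_{c;≤N}[t]∗_ρ f, φ*_{c;≤N}[t]∗_ρ f⟩`
(the limit is the supremum, the pairing being monotone in `N`). -/
noncomputable def FstarVal {W G : Type*} {I : Type*} [Group G] (act : G → I → I)
    (τ : W → W → Prop) (R : (ℕ → W) → ℝ) (s : W → G) (A a : W) (x : ℕ → W)
    (f : I → ℝ≥0∞) (c : ℕ → ℝ) (t : ℝ) : ℝ≥0∞ :=
  ⨆ N, innerE (convE act (phiLeC τ R s A a x c t N) f)
    (convE act (phiStar (phiLeC τ R s A a x c t N)) f)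

/-- The two-sided point `Xu.vx`: negative coordinates `⋯X u`, nonnegative `v x`. -/
def tsPoint {W : Type*} (X : ℤ → W) (x : ℕ → W) (u v : List W) : ℤ → W := fun i =>
  if 0 ≤ i then cat v x i.toNat
  else if h : (-i).toNat ≤ u.length ∧ 1 ≤ (-i).toNat ∧ 1 ≤ u.length then
    u.get ⟨u.length - (-i).toNat, by omega⟩
  else X (i + u.length)

/-- The approximating measure `μ_{c;N}[t]`: the weighted sum of Dirac masses at the
points `Xu.vx`, over `u ∈ 𝒲_m^{A,B}`, `v ∈ 𝒲_n^{b,a}` with `τ(B,b)=1` and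
`1 ≤ n,m ≤ N`, with weights
`t^{-n-m} c_n c_m R_n(vx) R_m(uvx) ⟨ρ(𝔰̲(u)𝔰̲(v))f,f⟩ / F(φ*)[t]`. -/
noncomputable def muCN {W G : Type*} {I : Type*} [Group G] [MeasurableSpace W]
    (act : G → I → I) (τ : W → W → Prop) (R : (ℕ → W) → ℝ) (s : W → G)
    (A a : W) (x : ℕ → W) (X : ℤ → W) (f : I → ℝ≥0∞) (c : ℕ → ℝ) (t : ℝ) (N : ℕ) :
    Measure (ℤ → W) :=
  Measure.sum (fun q : ℕ × ℕ × List W × List W =>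
    (Set.indicator
      {q' : ℕ × ℕ × List W × List W |
        1 ≤ q'.1 ∧ q'.1 ≤ N ∧ 1 ≤ q'.2.1 ∧ q'.2.1 ≤ N ∧
          ∃ B b : W, τ B b ∧ q'.2.2.2 ∈ WordSetC τ q'.2.1 A B ∧
            q'.2.2.1 ∈ WordSetC τ q'.1 b a}
      (fun q' =>
        (ENNReal.ofReal t)⁻¹ ^ (q'.1 + q'.2.1) *
          ENNReal.ofReal (c q'.1 * c q'.2.1) *
          ENNReal.ofReal (weight R q'.1 (cat q'.2.2.1 x) *
            weight R q'.2.1 (cat q'.2.2.2 (cat q'.2.2.1 x))) *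
          innerE (fun i => f (act (wprod s q'.2.2.2 * wprod s q'.2.2.1)⁻¹ i)) f /
          FstarVal act τ R s A a x f c t) q) •
      Measure.dirac (tsPoint X x q.2.2.2 q.2.2.1))


/-! ### Proof material -/

section Aux

lemma cat_nil (y : ℕ → W) : cat [] y = y := by
  funext i; simp [cat]

lemma cat_cons_zero (b : W) (w : List W) (y : ℕ → W) : cat (b :: w) y 0 = b := by
  simp [cat]

lemma cat_cons_succ (b : W) (w : List W) (y : ℕ → W) (i : ℕ) :
    cat (b :: w) y (i + 1) = cat w y i := by
  simp [cat]

lemma shift_cat_cons (b : W) (w : List W) (y : ℕ → W) :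
    shift (cat (b :: w) y) = cat w y := by
  funext i; exact cat_cons_succ b w y i

lemma cat_append (u v : List W) (y : ℕ → W) : cat (u ++ v) y = cat u (cat v y) := by
  induction u with
  | nil => simp [cat_nil]
  | cons b u ih =>
    funext i
    cases i with
    | zero => simp [cat_cons_zero]
    | succ i =>
      rw [List.cons_append, cat_cons_succ, cat_cons_succ, ih]

lemma weight_zero (R : (ℕ → W) → ℝ) (y : ℕ → W) : weight R 0 y = 1 := by
  simp [weight]

lemma weight_succ (R : (ℕ → W) → ℝ) (n : ℕ) (y : ℕ → W) :
    weight R (n + 1) y = R y * weight R n (shift y) := by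
  simp [weight, Finset.prod_range_succ', mul_comm]

lemma weight_append (R : (ℕ → W) → ℝ) (u v : List W) (y : ℕ → W) :
    weight R (u ++ v).length (cat (u ++ v) y) =
      weight R v.length (cat v y) * weight R u.length (cat u (cat v y)) := by
  induction u with
  | nil => simp [cat_nil, weight_zero]
  | cons b u ih =>
    rw [List.cons_append, List.length_cons, List.length_cons, weight_succ, weight_succ,
      shift_cat_cons, shift_cat_cons, ih, ← List.cons_append, cat_append]
    ring

lemma shift_mem {τ : W → W → Prop} {y : ℕ → W} (hy : y ∈ SigmaPlus τ) :
    shift y ∈ SigmaPlus τ := fun i => hy (i + 1)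

lemma weight_pos {τ : W → W → Prop} {R : (ℕ → W) → ℝ}
    (hRpos : ∀ x ∈ SigmaPlus τ, 0 < R x) (n : ℕ) :
    ∀ y ∈ SigmaPlus τ, 0 < weight R n y := by
  induction n with
  | zero => intro y _; simp [weight_zero]
  | succ n ih =>
    intro y hy
    rw [weight_succ]
    exact mul_pos (hRpos y hy) (ih _ (shift_mem hy))

lemma weight_le {τ : W → W → Prop} {R : (ℕ → W) → ℝ}
    (hRpos : ∀ x ∈ SigmaPlus τ, 0 < R x) {b : ℝ} (hb : ∀ x ∈ SigmaPlus τ, R x ≤ b) (n : ℕ) :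
    ∀ y ∈ SigmaPlus τ, weight R n y ≤ b ^ n := by
  induction n with
  | zero => intro y _; simp [weight_zero]
  | succ n ih =>
    intro y hy
    rw [weight_succ, pow_succ, mul_comm]
    exact mul_le_mul (ih _ (shift_mem hy)) (hb y hy) (hRpos y hy).le
      ((weight_pos hRpos n _ (shift_mem hy)).le.trans (ih _ (shift_mem hy)))

lemma cat_mem {τ : W → W → Prop} {y : ℕ → W} (hy : y ∈ SigmaPlus τ) (w : List W)
    (hw : w.IsChain τ) (hl : ∀ b ∈ w.getLast?, τ b (y 0)) : cat w y ∈ SigmaPlus τ := by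
  induction w with
  | nil => rwa [cat_nil]
  | cons b w ih =>
    have h1 : cat w y ∈ SigmaPlus τ := by
      apply ih hw.tail
      intro b' hb'
      apply hl
      cases w with
      | nil => simp at hb'
      | cons d w => simpa using hb'
    intro i
    cases i with
    | zero =>
      rw [cat_cons_zero, cat_cons_succ]
      cases w with
      | nil => rw [cat_nil]; exact hl b (by simp)
      | cons d w => rw [cat_cons_zero]; simp at hw; exact hw.1
    | succ i => rw [cat_cons_succ, cat_cons_succ]; exact h1 i

lemma cat_agree (w : List W) (y z : ℕ → W) (h : y 0 = z 0) :
    ∀ i < w.length + 1, cat w y i = cat w z i := by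
  induction w with
  | nil => intro i hi; simp at hi; subst hi; simpa [cat_nil]
  | cons b w ih =>
    intro i hi
    cases i with
    | zero => simp [cat_cons_zero]
    | succ i => rw [cat_cons_succ, cat_cons_succ]; apply ih; simp at hi; omega

lemma distortion {τ : W → W → Prop} {R : (ℕ → W) → ℝ} {C₀ θ : ℝ}
    (hRpos : ∀ x ∈ SigmaPlus τ, 0 < R x) (hH : LocallyHolder τ R C₀ θ)
    (y z : ℕ → W) (h : y 0 = z 0) (u : List W)
    (hy : cat u y ∈ SigmaPlus τ) (hz : cat u z ∈ SigmaPlus τ) :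
    weight R u.length (cat u y) ≤ Real.exp (C₀ * (1 - θ)⁻¹) * weight R u.length (cat u z) := by
  obtain ⟨hC, hθ, hθ1, hH⟩ := hH
  have key : weight R u.length (cat u y) ≤
      Real.exp (∑ i ∈ Finset.range u.length, C₀ * θ ^ (i + 2)) *
        weight R u.length (cat u z) := by
    induction u with
    | nil => simp [weight_zero]
    | cons b u ih =>
      have hy' := shift_mem hy
      have hz' := shift_mem hz
      rw [shift_cat_cons] at hy' hz'
      have h1 := ih hy' hz'
      rw [List.length_cons, weight_succ, weight_succ, shift_cat_cons, shift_cat_cons,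
        Finset.sum_range_succ, Real.exp_add]
      have h2 := hH _ hy _ hz (u.length + 2) (by omega) (cat_agree (b :: u) y z h)
      have h3 : R (cat (b :: u) y) ≤ Real.exp (C₀ * θ ^ (u.length + 2)) * R (cat (b :: u) z) := by
        rw [← Real.log_le_log_iff (hRpos _ hy) (mul_pos (Real.exp_pos _) (hRpos _ hz)),
          Real.log_mul (Real.exp_pos _).ne' (hRpos _ hz).ne', Real.log_exp]
        linarith [(abs_le.1 h2).2]
      calc _ ≤ _ := mul_le_mul h3 h1 (weight_pos hRpos _ _ hy').le
            (mul_pos (Real.exp_pos _) (hRpos _ hz)).le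
        _ = _ := by ring
  refine key.trans (mul_le_mul_of_nonneg_right (Real.exp_le_exp.2 ?_) (weight_pos hRpos _ _ hz).le)
  rw [← Finset.mul_sum]
  refine mul_le_mul_of_nonneg_left ?_ hC.le
  calc ∑ i ∈ Finset.range u.length, θ ^ (i + 2) ≤ ∑ i ∈ Finset.range u.length, θ ^ i :=
        Finset.sum_le_sum fun i _ => pow_le_pow_of_le_one hθ.le hθ1.le (by omega)
    _ ≤ ∑' i, θ ^ i := (summable_geometric_of_lt_one hθ.le hθ1).sum_le_tsum _
        (fun i _ => by positivity)
    _ = (1 - θ)⁻¹ := tsum_geometric_of_lt_one hθ.le hθ1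

lemma R_bdd [Fintype W] {τ : W → W → Prop} {R : (ℕ → W) → ℝ} {C₀ θ : ℝ}
    (hRpos : ∀ x ∈ SigmaPlus τ, 0 < R x) (hH : LocallyHolder τ R C₀ θ) :
    ∃ b : ℝ, 0 < b ∧ ∀ y ∈ SigmaPlus τ, R y ≤ b := by
  obtain ⟨hC, hθ, hθ1, hH⟩ := hH
  have h1 : ∀ p : W × W, ∃ M : ℝ, ∀ y ∈ SigmaPlus τ, y 0 = p.1 → y 1 = p.2 → R y ≤ M := by
    intro p
    by_cases hp : ∃ z ∈ SigmaPlus τ, z 0 = p.1 ∧ z 1 = p.2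
    · obtain ⟨z, hz, hz0, hz1⟩ := hp
      refine ⟨Real.exp (C₀ * θ ^ 2 + Real.log (R z)), fun y hy hy0 hy1 => ?_⟩
      have h2 := hH y hy z hz 2 le_rfl (by
        intro i hi
        interval_cases i
        · rw [hy0, hz0]
        · rw [hy1, hz1])
      rw [← Real.log_le_iff_le_exp (hRpos y hy)]
      linarith [(abs_le.1 h2).2]
    · exact ⟨0, fun y hy h0 h1 => (hp ⟨y, hy, h0, h1⟩).elim⟩
  choose M hM using h1
  refine ⟨1 + ∑ p, |M p|, by positivity, fun y hy => ?_⟩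
  have h3 := hM (y 0, y 1) y hy rfl rfl
  have h4 : |M (y 0, y 1)| ≤ ∑ p, |M p| :=
    Finset.single_le_sum (f := fun p => |M p|) (fun p _ => abs_nonneg _) (Finset.mem_univ _)
  linarith [le_abs_self (M (y 0, y 1))]

lemma wordSetC_ne {τ : W → W → Prop} {n : ℕ} {B b : W} {w : List W} (h : w ∈ WordSetC τ n B b) :
    1 ≤ w.length := by
  obtain ⟨_, _, h, _⟩ := h
  cases w with
  | nil => simp at h
  | cons _ _ => simp

lemma split_iff {τ : W → W → Prop} {A a : W} (u v : List W) :
    (∃ B b : W, τ B b ∧ u ∈ WordSetC τ u.length A B ∧ v ∈ WordSetC τ v.length b a) ↔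
      (1 ≤ u.length ∧ 1 ≤ v.length ∧ u ++ v ∈ WordSetC τ (u ++ v).length A a) := by
  constructor
  · rintro ⟨B, b, hBb, hu, hv⟩
    refine ⟨wordSetC_ne hu, wordSetC_ne hv, rfl, ?_, ?_, ?_⟩
    · refine List.isChain_append.2 ⟨hu.2.1, hv.2.1, ?_⟩
      intro p hp q hq
      rw [hu.2.2.2] at hp
      rw [hv.2.2.1] at hq
      simp at hp hq
      subst hp; subst hq; exact hBb
    · rw [List.head?_append, hu.2.2.1]; rfl
    · rw [List.getLast?_append, hv.2.2.2]; rfl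
  · rintro ⟨hu, hv, -, hc, hh, hl⟩
    have hu0 : u ≠ [] := by rintro rfl; simp at hu
    have hv0 : v ≠ [] := by rintro rfl; simp at hv
    have hc := List.isChain_append.1 hc
    refine ⟨u.getLast hu0, v.head hv0, ?_, ⟨rfl, hc.1, ?_, ?_⟩, ⟨rfl, hc.2.1, ?_, ?_⟩⟩
    · exact hc.2.2 _ (by simp [List.getLast?_eq_some_getLast hu0]) _
        (by simp [List.head?_eq_some_head hv0])
    · rwa [List.head?_append_of_ne_nil _ hu0] at hh
    · exact List.getLast?_eq_some_getLast hu0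
    · exact List.head?_eq_some_head hv0
    · rwa [List.getLast?_append_of_ne_nil _ hv0] at hl

lemma tsum_iSup_cut {ι : Type*} (P : ℕ → ι → Prop) [∀ N i, Decidable (P N i)]
    (hmono : ∀ N M i, N ≤ M → P N i → P M i)
    (hex : ∀ i, ∃ N, P N i) (h : ι → ℝ≥0∞) :
    ⨆ N, ∑' i, (if P N i then h i else 0) = ∑' i, h i := by
  apply le_antisymm
  · refine iSup_le fun N => ENNReal.tsum_le_tsum fun i => ?_
    split_ifs <;> simp
  · rw [ENNReal.tsum_eq_iSup_sum]
    refine iSup_le fun s => ?_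
    choose n hn using hex
    refine le_trans ?_ (le_iSup _ (s.sup n))
    refine le_trans (le_of_eq ?_) (ENNReal.sum_le_tsum s)
    refine Finset.sum_congr rfl fun i hi => ?_
    rw [if_pos (hmono _ _ _ (Finset.le_sup hi) (hn i))]

lemma tendsto_tsum_cut {ι : Type*} (P : ℕ → ι → Prop) [∀ N i, Decidable (P N i)]
    (hmono : ∀ N M i, N ≤ M → P N i → P M i)
    (hex : ∀ i, ∃ N, P N i) (h : ι → ℝ≥0∞) :
    Tendsto (fun N => ∑' i, (if P N i then h i else 0)) atTop (nhds (∑' i, h i)) := by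
  rw [← tsum_iSup_cut P hmono hex h]
  apply tendsto_atTop_iSup
  intro N M hNM
  refine ENNReal.tsum_le_tsum fun i => ?_
  by_cases h1 : P N i
  · rw [if_pos h1, if_pos (hmono _ _ _ hNM h1)]
  · rw [if_neg h1]; exact zero_le

lemma tsPoint_shift (X : ℤ → W) (x : ℕ → W) (w : List W) (m : ℕ) (hm : m < w.length) :
    shiftZ (tsPoint X x (w.take m) (w.drop m)) =
      tsPoint X x (w.take (m + 1)) (w.drop (m + 1)) := by
  funext i
  have hd : w.drop m = w[m] :: w.drop (m + 1) := List.drop_eq_getElem_cons hm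
  have l1 : (w.take m).length = m := by simp; omega
  have l2 : (w.take (m + 1)).length = m + 1 := by simp; omega
  simp only [shiftZ, tsPoint]
  by_cases h0 : 0 ≤ i
  · rw [if_pos h0, if_pos (by omega), hd]
    have : (i + 1).toNat = i.toNat + 1 := by omega
    rw [this, cat_cons_succ]
  · rw [if_neg h0]
    by_cases h1 : i = -1
    · subst h1
      rw [if_pos (by norm_num), dif_pos (by rw [l2]; norm_num), hd]
      rw [show (-1 + 1 : ℤ).toNat = 0 from rfl, cat_cons_zero]
      simp only [List.get_eq_getElem, List.getElem_take]
      congr 1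
      rw [l2]; simp
    · rw [if_neg (by omega)]
      by_cases h2 : (-i).toNat ≤ m + 1
      · rw [dif_pos (by rw [l1]; omega), dif_pos (by rw [l2]; omega)]
        simp only [List.get_eq_getElem, List.getElem_take]
        congr 1
        rw [l1, l2]; omega
      · rw [dif_neg (by rw [l1]; omega), dif_neg (by rw [l2]; omega), l1, l2]
        congr 1
        push_cast; ring

end Aux

section Sums

open Classical

variable [Group G] {I : Type*}

/-- matrix coefficient `⟨ρ(g) f, f⟩`. -/
noncomputable def ipE (act : G → I → I) (f : I → ℝ≥0∞) (g : G) : ℝ≥0∞ :=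
  innerE (fun i => f (act g⁻¹ i)) f

/-- weight of a word in the `G`-density. -/
noncomputable def Om0 (τ : W → W → Prop) (R : (ℕ → W) → ℝ) (A a : W) (x : ℕ → W)
    (c : ℕ → ℝ) (t : ℝ) (w : List W) : ℝ≥0∞ :=
  if w ∈ WordSetC τ w.length A a then
    (ENNReal.ofReal t)⁻¹ ^ w.length * ENNReal.ofReal (c w.length) *
      ENNReal.ofReal (weight R w.length (cat w x)) else 0

lemma phiLeC_eq (τ : W → W → Prop) (R : (ℕ → W) → ℝ) (s : W → G)
    (A a : W) (x : ℕ → W) (c : ℕ → ℝ) (t : ℝ) (N : ℕ) (g : G) :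
    phiLeC τ R s A a x c t N g =
      ∑' w : List W, if w.length ≤ N ∧ wprod s w = g then Om0 τ R A a x c t w else 0 := by
  unfold phiLeC
  have h1 : ∀ n ∈ Finset.Icc 1 N, (ENNReal.ofReal t)⁻¹ ^ n * ENNReal.ofReal (c n) *
      ∑' w : {w : List W // w ∈ WordSetC τ n A a ∧ wprod s w = g},
      ENNReal.ofReal (weight R n (cat w.1 x)) =
      ∑' w : List W, if n = w.length then
        (if w.length ≤ N ∧ wprod s w = g then Om0 τ R A a x c t w else 0) else 0 := by
    intro n hn
    rw [Finset.mem_Icc] at hn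
    have h2 := tsum_subtype {w : List W | w ∈ WordSetC τ n A a ∧ wprod s w = g}
      (fun w => ENNReal.ofReal (weight R n (cat w x)))
    have h3 : (∑' w : {w : List W // w ∈ WordSetC τ n A a ∧ wprod s w = g},
      ENNReal.ofReal (weight R n (cat w.1 x))) = _ := h2
    rw [h3, ← ENNReal.tsum_mul_left]
    refine tsum_congr fun w => ?_
    by_cases hw : w ∈ WordSetC τ n A a ∧ wprod s w = g
    · have hl : w.length = n := hw.1.1
      rw [Set.indicator_of_mem (by exact hw), if_pos hl.symm, if_pos ⟨hl.le.trans hn.2, hw.2⟩,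
        Om0, if_pos (by rw [hl]; exact hw.1), hl]
    · rw [Set.indicator_of_notMem (by exact hw), mul_zero]
      split_ifs with h4 h5
      · rw [Om0, if_neg]
        intro h6
        exact hw ⟨by rw [h4]; exact h6, h5.2⟩
      · rfl
      · rfl
  rw [Finset.sum_congr rfl h1, ← Summable.tsum_finsetSum (fun i _ => ENNReal.summable)]
  refine tsum_congr fun w => ?_
  rw [Finset.sum_ite_eq']
  split_ifs with h2 h3 h3
  · rfl
  · rfl
  · rw [Om0, if_neg]
    intro h6
    exact h2 (Finset.mem_Icc.2 ⟨wordSetC_ne h6, h3.1⟩)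
  · rfl

lemma sum_phiLeC (τ : W → W → Prop) (R : (ℕ → W) → ℝ) (s : W → G)
    (A a : W) (x : ℕ → W) (c : ℕ → ℝ) (t : ℝ) (N : ℕ) (k : G → ℝ≥0∞) :
    ∑' g, phiLeC τ R s A a x c t N g * k g =
      ∑' w : List W, if w.length ≤ N then Om0 τ R A a x c t w * k (wprod s w) else 0 := by
  simp_rw [phiLeC_eq, ← ENNReal.tsum_mul_right]
  rw [ENNReal.tsum_comm]
  refine tsum_congr fun w => ?_
  rw [tsum_eq_single (wprod s w)]
  · by_cases h : w.length ≤ N <;> simp [h]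
  · intro g hg
    rw [if_neg (fun h => hg h.2.symm), zero_mul]

lemma inner_conv (act : G → I → I) (φ : G → ℝ≥0∞) (f : I → ℝ≥0∞) :
    innerE (convE act φ f) f = ∑' g, φ g * ipE act f g := by
  unfold innerE convE ipE innerE
  simp_rw [← ENNReal.tsum_mul_right, ← ENNReal.tsum_mul_left]
  rw [ENNReal.tsum_comm]
  simp_rw [mul_assoc]

lemma iSup_inner (act : G → I → I) (τ : W → W → Prop) (R : (ℕ → W) → ℝ) (s : W → G)
    (A a : W) (x : ℕ → W) (c : ℕ → ℝ) (t : ℝ) (f : I → ℝ≥0∞) :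
    ⨆ N, innerE (convE act (phiLeC τ R s A a x c t N) f) f =
      ∑' w : List W, Om0 τ R A a x c t w * ipE act f (wprod s w) := by
  simp_rw [inner_conv, sum_phiLeC]
  exact tsum_iSup_cut (fun N (w : List W) => w.length ≤ N) (fun N M i h h' => h'.trans h)
    (fun i => ⟨_, le_rfl⟩) _

lemma inner_conv_star (act : G → I → I) (hact1 : ∀ i, act 1 i = i)
    (hactm : ∀ g h i, act (g * h) i = act g (act h i)) (φ : G → ℝ≥0∞) (f : I → ℝ≥0∞) :
    innerE (convE act φ f) (convE act (phiStar φ) f) =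
      ∑' g, φ g * ∑' h, φ h * ipE act f (h * g) := by
  have hperm : ∀ h : G, ∃ e : I ≃ I, ∀ i, e i = act h i := fun h =>
    ⟨⟨act h, act h⁻¹, fun i => by rw [← hactm]; simp [hact1],
      fun i => by rw [← hactm]; simp [hact1]⟩, fun i => rfl⟩
  have h1 : ∀ i, convE act (phiStar φ) f i = ∑' h, φ h * f (act h i) := by
    intro i
    unfold convE phiStar
    exact (Equiv.inv G).tsum_eq (fun h => φ h * f (act h i))
  have h2 : ∀ g h, ipE act f (h * g) = ∑' i, f (act g⁻¹ i) * f (act h i) := by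
    intro g h
    obtain ⟨e, he⟩ := hperm h
    unfold ipE innerE
    rw [← e.tsum_eq]
    refine tsum_congr fun i => ?_
    simp only [he]
    rw [← hactm]
    simp
  simp_rw [h2]
  unfold innerE
  simp_rw [h1]
  unfold convE
  simp_rw [← ENNReal.tsum_mul_right, ← ENNReal.tsum_mul_left]
  rw [ENNReal.tsum_comm]
  refine tsum_congr fun g => ?_
  rw [ENNReal.tsum_comm]
  refine tsum_congr fun h => tsum_congr fun i => ?_
  ring

lemma FstarVal_le (act : G → I → I) (hact1 : ∀ i, act 1 i = i)
    (hactm : ∀ g h i, act (g * h) i = act g (act h i))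
    (τ : W → W → Prop) (R : (ℕ → W) → ℝ) (s : W → G)
    (A a : W) (x : ℕ → W) (c : ℕ → ℝ) (t : ℝ) (f : I → ℝ≥0∞) :
    FstarVal act τ R s A a x f c t ≤ ∑' v : List W, ∑' u : List W,
      Om0 τ R A a x c t v * (Om0 τ R A a x c t u * ipE act f (wprod s u * wprod s v)) := by
  unfold FstarVal
  refine iSup_le fun N => ?_
  rw [inner_conv_star act hact1 hactm]
  rw [sum_phiLeC τ R s A a x c t N
    (fun g => ∑' h, phiLeC τ R s A a x c t N h * ipE act f (h * g))]
  refine ENNReal.tsum_le_tsum fun v => ?_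
  rw [ENNReal.tsum_mul_left]
  split_ifs
  · gcongr
    rw [sum_phiLeC τ R s A a x c t N (fun h => ipE act f (h * wprod s v))]
    refine ENNReal.tsum_le_tsum fun u => ?_
    split_ifs
    · exact le_rfl
    · exact zero_le
  · exact zero_le

lemma ipE_le (act : G → I → I) (hact1 : ∀ i, act 1 i = i)
    (hactm : ∀ g h i, act (g * h) i = act g (act h i)) (f : I → ℝ≥0∞) (g : G) :
    ipE act f g ≤ 2 * normSqE f := by
  let e : I ≃ I := ⟨act g⁻¹, act g, fun i => by rw [← hactm]; simp [hact1],
      fun i => by rw [← hactm]; simp [hact1]⟩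
  have h1 : ∑' i, f (act g⁻¹ i) * f (act g⁻¹ i) = normSqE f := e.tsum_eq (fun i => f i * f i)
  rw [two_mul]
  nth_rewrite 1 [← h1]
  unfold normSqE ipE innerE
  rw [← ENNReal.tsum_add]
  refine ENNReal.tsum_le_tsum fun i => ?_
  rcases le_total (f (act g⁻¹ i)) (f i) with h | h
  · exact le_trans (mul_le_mul_left h _) le_add_self
  · exact le_trans (mul_le_mul_right h _) le_self_add

/-- the coefficients `c_m c_{L-m}` of the splitting of a word of length `L`. -/
noncomputable def gg (c : ℕ → ℝ) (L m : ℕ) : ℝ≥0∞ :=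
  if 1 ≤ m ∧ m < L then ENNReal.ofReal (c m) * ENNReal.ofReal (c (L - m)) else 0

/-- mass of a point `σ^m (X.wx)`. -/
noncomputable def pp (X : ℤ → W) (x : ℕ → W) (S : Set (ℤ → W)) (w : List W) (m : ℕ) : ℝ≥0∞ :=
  S.indicator 1 (tsPoint X x (w.take m) (w.drop m))

lemma wprod_append (s : W → G) (u v : List W) : wprod s (u ++ v) = wprod s u * wprod s v := by
  simp [wprod]

lemma gg_shift_left {c : ℕ → ℝ} (hpos : ∀ n, 0 < c n) (hmono : Monotone c) {ε : ℝ} (hε : 0 ≤ ε)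
    {K : ℕ} (hK1 : 1 ≤ K) (hK : ∀ n, K ≤ n → c (n + 1) ≤ (1 + ε) * c n) (L m : ℕ) :
    gg c L m ≤ ENNReal.ofReal (1 + ε) * gg c L (m + 1) +
      if m ∈ Finset.Ico (L - K) L then ENNReal.ofReal (c K) * ENNReal.ofReal (c L) else 0 := by
  unfold gg
  by_cases h : 1 ≤ m ∧ m < L
  · rw [if_pos h]
    by_cases h2 : L - K ≤ m
    · rw [if_pos (Finset.mem_Ico.2 ⟨h2, h.2⟩), mul_comm]
      refine le_trans ?_ le_add_self
      exact mul_le_mul' (ENNReal.ofReal_le_ofReal (hmono (by omega)))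
        (ENNReal.ofReal_le_ofReal (hmono (by omega)))
    · refine le_trans ?_ le_self_add
      rw [if_pos (by omega), mul_comm, mul_comm (ENNReal.ofReal (c (m + 1))), ← mul_assoc,
        ← ENNReal.ofReal_mul (show (0 : ℝ) ≤ 1 + ε by positivity)]
      refine mul_le_mul' (ENNReal.ofReal_le_ofReal ?_) (ENNReal.ofReal_le_ofReal (hmono (by omega)))
      have := hK (L - (m + 1)) (by omega)
      rwa [show L - (m + 1) + 1 = L - m by omega] at this
  · rw [if_neg h]; exact zero_le

lemma gg_shift_right {c : ℕ → ℝ} (hpos : ∀ n, 0 < c n) (hmono : Monotone c) {ε : ℝ} (hε : 0 ≤ ε)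
    {K : ℕ} (hK1 : 1 ≤ K) (hK : ∀ n, K ≤ n → c (n + 1) ≤ (1 + ε) * c n) (L m : ℕ) :
    gg c L (m + 1) ≤ ENNReal.ofReal (1 + ε) * gg c L m +
      if m ∈ Finset.range K then ENNReal.ofReal (c K) * ENNReal.ofReal (c L) else 0 := by
  unfold gg
  by_cases h : 1 ≤ m + 1 ∧ m + 1 < L
  · rw [if_pos h]
    by_cases h2 : m < K
    · rw [if_pos (Finset.mem_range.2 h2)]
      refine le_trans ?_ le_add_self
      exact mul_le_mul' (ENNReal.ofReal_le_ofReal (hmono (by omega)))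
        (ENNReal.ofReal_le_ofReal (hmono (by omega)))
    · refine le_trans ?_ le_self_add
      rw [if_pos (by omega), ← mul_assoc,
        ← ENNReal.ofReal_mul (show (0 : ℝ) ≤ 1 + ε by positivity)]
      refine mul_le_mul' (ENNReal.ofReal_le_ofReal ?_) (ENNReal.ofReal_le_ofReal (hmono (by omega)))
      exact hK m (by omega)
  · rw [if_neg h]; exact zero_le

lemma sum_shift_left {c : ℕ → ℝ} (hpos : ∀ n, 0 < c n) (hmono : Monotone c) {ε : ℝ} (hε : 0 ≤ ε)
    {K : ℕ} (hK1 : 1 ≤ K) (hK : ∀ n, K ≤ n → c (n + 1) ≤ (1 + ε) * c n) (L : ℕ)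
    (p : ℕ → ℝ≥0∞) (hp : ∀ m, p m ≤ 1) :
    ∑' m, gg c L m * p (m + 1) ≤ ENNReal.ofReal (1 + ε) * ∑' m, gg c L m * p m +
      K * ENNReal.ofReal (c K) * ENNReal.ofReal (c L) := by
  calc ∑' m, gg c L m * p (m + 1)
      ≤ ∑' m, (ENNReal.ofReal (1 + ε) * (gg c L (m + 1) * p (m + 1)) +
        if m ∈ Finset.Ico (L - K) L then ENNReal.ofReal (c K) * ENNReal.ofReal (c L) else 0) := by
        refine ENNReal.tsum_le_tsum fun m => ?_
        refine (mul_le_mul_left (gg_shift_left hpos hmono hε hK1 hK L m) _).trans ?_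
        rw [add_mul, mul_assoc]
        gcongr
        exact mul_le_of_le_one_right' (hp _)
    _ ≤ _ := by
        rw [ENNReal.tsum_add, ENNReal.tsum_mul_left]
        refine add_le_add (mul_le_mul_right ?_ _) ?_
        · exact ENNReal.tsum_comp_le_tsum_of_injective (add_left_injective 1)
            (fun m => gg c L m * p m)
        · rw [tsum_eq_sum (s := Finset.Ico (L - K) L) (fun m hm => if_neg hm),
            Finset.sum_congr rfl (fun m hm => if_pos hm), Finset.sum_const, nsmul_eq_mul, mul_assoc]
          gcongr
          simp
          omega

lemma sum_shift_right {c : ℕ → ℝ} (hpos : ∀ n, 0 < c n) (hmono : Monotone c) {ε : ℝ} (hε : 0 ≤ ε)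
    {K : ℕ} (hK1 : 1 ≤ K) (hK : ∀ n, K ≤ n → c (n + 1) ≤ (1 + ε) * c n) (L : ℕ)
    (p : ℕ → ℝ≥0∞) (hp : ∀ m, p m ≤ 1) :
    ∑' m, gg c L m * p m ≤ ENNReal.ofReal (1 + ε) * ∑' m, gg c L m * p (m + 1) +
      K * ENNReal.ofReal (c K) * ENNReal.ofReal (c L) := by
  have h0 : gg c L 0 = 0 := by simp [gg]
  rw [tsum_eq_zero_add' ENNReal.summable, h0, zero_mul, zero_add]
  calc ∑' m, gg c L (m + 1) * p (m + 1)
      ≤ ∑' m, (ENNReal.ofReal (1 + ε) * (gg c L m * p (m + 1)) +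
        if m ∈ Finset.range K then ENNReal.ofReal (c K) * ENNReal.ofReal (c L) else 0) := by
        refine ENNReal.tsum_le_tsum fun m => ?_
        refine (mul_le_mul_left (gg_shift_right hpos hmono hε hK1 hK L m) _).trans ?_
        rw [add_mul, mul_assoc]
        gcongr
        exact mul_le_of_le_one_right' (hp _)
    _ ≤ _ := by
        rw [ENNReal.tsum_add, ENNReal.tsum_mul_left]
        gcongr
        rw [tsum_eq_sum (s := Finset.range K) (fun m hm => if_neg hm),
            Finset.sum_congr rfl (fun m hm => if_pos hm), Finset.sum_const, nsmul_eq_mul, mul_assoc]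
        simp

end Sums

section Main

open Classical

variable [Group G] {I : Type*}

lemma Om0_mul (τ : W → W → Prop) (R : (ℕ → W) → ℝ) (A a : W) (x : ℕ → W)
    (c : ℕ → ℝ) (t : ℝ) (w : List W) :
    Om0 τ R A a x c t w =
      Om0 τ R A a x (fun _ => 1) t w * ENNReal.ofReal (c w.length) := by
  unfold Om0
  split_ifs
  · simp; ring
  · simp

/-- unnormalised limit mass. -/
noncomputable def MM (act : G → I → I) (τ : W → W → Prop) (R : (ℕ → W) → ℝ) (s : W → G)
    (A a : W) (x : ℕ → W) (X : ℤ → W) (f : I → ℝ≥0∞) (c : ℕ → ℝ) (t : ℝ)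
    (S : Set (ℤ → W)) : ℝ≥0∞ :=
  ∑' w : List W, ∑' m : ℕ, Om0 τ R A a x (fun _ => 1) t w * ipE act f (wprod s w) *
    (gg c w.length m * pp X x S w m)

lemma pp_le (X : ℤ → W) (x : ℕ → W) (S : Set (ℤ → W)) (w : List W) (m : ℕ) :
    pp X x S w m ≤ 1 := by
  unfold pp
  exact Set.indicator_le_self' (by simp) _

lemma gg_pp_shift (X : ℤ → W) (x : ℕ → W) (S : Set (ℤ → W)) (c : ℕ → ℝ) (w : List W) (m : ℕ) :
    gg c w.length m * pp X x (shiftZ ⁻¹' S) w m = gg c w.length m * pp X x S w (m + 1) := by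
  by_cases h : m < w.length
  · unfold pp
    rw [← tsPoint_shift X x w m h]
    rfl
  · unfold gg
    rw [if_neg (by omega), zero_mul, zero_mul]

lemma MM_shift_le (act : G → I → I) (τ : W → W → Prop) (R : (ℕ → W) → ℝ) (s : W → G)
    (A a : W) (x : ℕ → W) (X : ℤ → W) (f : I → ℝ≥0∞) {c : ℕ → ℝ} (t : ℝ)
    (S : Set (ℤ → W)) (hpos : ∀ n, 0 < c n) (hmono : Monotone c) {ε : ℝ} (hε : 0 ≤ ε)
    {K : ℕ} (hK1 : 1 ≤ K) (hK : ∀ n, K ≤ n → c (n + 1) ≤ (1 + ε) * c n) :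
    MM act τ R s A a x X f c t (shiftZ ⁻¹' S) ≤
      ENNReal.ofReal (1 + ε) * MM act τ R s A a x X f c t S + K * ENNReal.ofReal (c K) *
        ⨆ N, innerE (convE act (phiLeC τ R s A a x c t N) f) f := by
  rw [iSup_inner]
  unfold MM
  rw [← ENNReal.tsum_mul_left, ← ENNReal.tsum_mul_left, ← ENNReal.tsum_add]
  refine ENNReal.tsum_le_tsum fun w => ?_
  simp_rw [gg_pp_shift, ENNReal.tsum_mul_left]
  refine (mul_le_mul_right (sum_shift_left hpos hmono hε hK1 hK w.length _
    (pp_le X x S w)) _).trans (le_of_eq ?_)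
  rw [Om0_mul τ R A a x c t w]
  ring

lemma MM_le_shift (act : G → I → I) (τ : W → W → Prop) (R : (ℕ → W) → ℝ) (s : W → G)
    (A a : W) (x : ℕ → W) (X : ℤ → W) (f : I → ℝ≥0∞) {c : ℕ → ℝ} (t : ℝ)
    (S : Set (ℤ → W)) (hpos : ∀ n, 0 < c n) (hmono : Monotone c) {ε : ℝ} (hε : 0 ≤ ε)
    {K : ℕ} (hK1 : 1 ≤ K) (hK : ∀ n, K ≤ n → c (n + 1) ≤ (1 + ε) * c n) :
    MM act τ R s A a x X f c t S ≤
      ENNReal.ofReal (1 + ε) * MM act τ R s A a x X f c t (shiftZ ⁻¹' S) +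
        K * ENNReal.ofReal (c K) *
        ⨆ N, innerE (convE act (phiLeC τ R s A a x c t N) f) f := by
  rw [iSup_inner]
  unfold MM
  rw [← ENNReal.tsum_mul_left, ← ENNReal.tsum_mul_left, ← ENNReal.tsum_add]
  refine ENNReal.tsum_le_tsum fun w => ?_
  simp_rw [gg_pp_shift, ENNReal.tsum_mul_left]
  refine (mul_le_mul_right (sum_shift_right hpos hmono hε hK1 hK w.length _
    (pp_le X x S w)) _).trans (le_of_eq ?_)
  rw [Om0_mul τ R A a x c t w]
  ring

lemma word_mem {τ : W → W → Prop} {A a : W} {x : ℕ → W} (hx : x ∈ SigmaPlus τ)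
    (hxA : x 0 = A) (haA : τ a A) {n : ℕ} {B : W} {w : List W} (hw : w ∈ WordSetC τ n B a) :
    cat w x ∈ SigmaPlus τ := by
  apply cat_mem hx w hw.2.1
  intro b hb
  rw [hw.2.2.2] at hb
  simp at hb
  rw [← hb, hxA]; exact haA

lemma muCN_tendsto [MeasurableSpace W] (act : G → I → I) {τ : W → W → Prop}
    {R : (ℕ → W) → ℝ} (s : W → G)
    {A a : W} {x : ℕ → W} (X : ℤ → W) (f : I → ℝ≥0∞) {c : ℕ → ℝ} (t : ℝ)
    (hRpos : ∀ x ∈ SigmaPlus τ, 0 < R x) (hx : x ∈ SigmaPlus τ)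
    (hxA : x 0 = A) (haA : τ a A) (hpos : ∀ n, 0 < c n)
    (S : Set (ℤ → W)) (hS : MeasurableSet S) :
    Tendsto (fun N => muCN act τ R s A a x X f c t N S) atTop
      (nhds (MM act τ R s A a x X f c t S / FstarVal act τ R s A a x f c t)) := by
  have hmain : ∀ N, muCN act τ R s A a x X f c t N S =
      ∑' p : List W × ℕ, if p.2 ≤ N ∧ p.1.length - p.2 ≤ N then
        Om0 τ R A a x (fun _ => 1) t p.1 * ipE act f (wprod s p.1) *
          (gg c p.1.length p.2 * pp X x S p.1 p.2) * (FstarVal act τ R s A a x f c t)⁻¹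
        else 0 := by
    intro N
    have hinj : Function.Injective (fun p : List W × ℕ =>
        ((p.1.length - p.2, p.2, p.1.drop p.2, p.1.take p.2) : ℕ × ℕ × List W × List W)) := by
      rintro ⟨w, m⟩ ⟨w', m'⟩ h
      simp only [Prod.mk.injEq] at h
      obtain ⟨-, rfl, h1, h2⟩ := h
      rw [← List.take_append_drop m w, ← List.take_append_drop m w', h1, h2]
    unfold muCN
    rw [Measure.sum_apply _ hS, ← hinj.tsum_eq]
    · refine tsum_congr ?_
      rintro ⟨w, m⟩
      rw [Measure.smul_apply, Measure.dirac_apply' _ hS, smul_eq_mul]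
      have hpp : S.indicator (1 : (ℤ → W) → ℝ≥0∞) (tsPoint X x (w.take m) (w.drop m)) =
        pp X x S w m := rfl
      simp only
      rw [hpp]
      by_cases hm : 1 ≤ m ∧ m < w.length
      · have l1 : (w.take m).length = m := by simp; omega
        have l2 : (w.drop m).length = w.length - m := by simp
        have hsp := split_iff (τ := τ) (A := A) (a := a) (w.take m) (w.drop m)
        have hwa := weight_append R (w.take m) (w.drop m) x
        have hwp := wprod_append s (w.take m) (w.drop m)
        rw [List.take_append_drop] at hsp hwa hwp
        rw [l1, l2] at hsp hwa
        by_cases hN : m ≤ N ∧ w.length - m ≤ N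
        · rw [if_pos hN]
          by_cases hw : w ∈ WordSetC τ w.length A a
          · rw [Set.indicator_of_mem]
            · simp only
              rw [← hwa, ← hwp, Om0, if_pos hw, gg, if_pos hm,
                show w.length - m + m = w.length by omega, ENNReal.ofReal_mul (hpos _).le]
              simp only [ipE, div_eq_mul_inv, ENNReal.ofReal_one, mul_one]
              ring
            · simp only [Set.mem_ofPred_eq]
              exact ⟨by omega, hN.2, hm.1, hN.1, hsp.2 ⟨by omega, by omega, hw⟩⟩
          · rw [Set.indicator_of_notMem, Om0, if_neg hw]
            · simp
            · simp only [Set.mem_ofPred_eq]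
              rintro ⟨-, -, -, -, h⟩
              exact hw (hsp.1 h).2.2
        · rw [if_neg hN, Set.indicator_of_notMem, zero_mul]
          simp only [Set.mem_ofPred_eq]
          rintro ⟨-, h1, -, h2, -⟩
          exact hN ⟨h2, h1⟩
      · rw [Set.indicator_of_notMem, gg, if_neg hm]
        · simp
        · simp only [Set.mem_ofPred_eq]
          rintro ⟨h1, -, h2, -⟩
          exact hm ⟨h2, by omega⟩
    · intro q hq
      rw [Function.mem_support] at hq
      by_contra hr
      apply hq
      rw [Measure.smul_apply, Set.indicator_of_notMem]
      · simp
      · rintro ⟨-, -, -, -, B, b, -, hu, hv⟩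
        apply hr
        obtain ⟨n, m, v, u⟩ := q
        refine ⟨(u ++ v, m), ?_⟩
        have h1 : u.length = m := hu.1
        have h2 : v.length = n := hv.1
        simp [← h1, ← h2]
  simp_rw [hmain]
  have := tendsto_tsum_cut (fun N (p : List W × ℕ) => p.2 ≤ N ∧ p.1.length - p.2 ≤ N)
    (fun N M i h h' => ⟨h'.1.trans h, h'.2.trans h⟩)
    (fun p => ⟨max p.2 (p.1.length - p.2), le_max_left _ _, le_max_right _ _⟩)
    (fun p => Om0 τ R A a x (fun _ => 1) t p.1 * ipE act f (wprod s p.1) *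
          (gg c p.1.length p.2 * pp X x S p.1 p.2) * (FstarVal act τ R s A a x f c t)⁻¹)
  rw [ENNReal.tsum_mul_right, ENNReal.tsum_prod', ← div_eq_mul_inv] at this
  exact this

lemma F_le_MM (act : G → I → I) (hact1 : ∀ i, act 1 i = i)
    (hactm : ∀ g h i, act (g * h) i = act g (act h i)) {τ : W → W → Prop}
    {R : (ℕ → W) → ℝ} (s : W → G)
    {A a : W} {x : ℕ → W} (X : ℤ → W) (f : I → ℝ≥0∞) {c : ℕ → ℝ} (t : ℝ)
    (hRpos : ∀ x ∈ SigmaPlus τ, 0 < R x) {C₀ θ : ℝ} (hH : LocallyHolder τ R C₀ θ)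
    (hx : x ∈ SigmaPlus τ)
    (hxA : x 0 = A) (haA : τ a A) :
    FstarVal act τ R s A a x f c t ≤ ENNReal.ofReal (Real.exp (C₀ * (1 - θ)⁻¹)) *
      MM act τ R s A a x X f c t Set.univ := by
  refine (FstarVal_le act hact1 hactm τ R s A a x c t f).trans ?_
  unfold MM
  have hinj : Function.Injective (fun p : List W × List W =>
      ((p.2 ++ p.1, p.2.length) : List W × ℕ)) := by
    rintro ⟨v, u⟩ ⟨v', u'⟩ h
    simp only [Prod.mk.injEq] at h
    obtain ⟨h1, h2⟩ := List.append_inj h.1 h.2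
    rw [h1, h2]
  have h1 := ENNReal.tsum_comp_le_tsum_of_injective hinj
    (fun p : List W × ℕ => Om0 τ R A a x (fun _ => 1) t p.1 * ipE act f (wprod s p.1) *
      (gg c p.1.length p.2 * pp X x Set.univ p.1 p.2))
  rw [ENNReal.tsum_prod', ENNReal.tsum_prod'] at h1
  refine le_trans ?_ (mul_le_mul_right h1 _)
  rw [← ENNReal.tsum_mul_left]
  refine ENNReal.tsum_le_tsum fun v => ?_
  rw [← ENNReal.tsum_mul_left]
  refine ENNReal.tsum_le_tsum fun u => ?_
  by_cases hv : v ∈ WordSetC τ v.length A a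
  swap
  · nth_rewrite 1 [Om0]
    rw [if_neg hv, zero_mul]; exact zero_le
  by_cases hu : u ∈ WordSetC τ u.length A a
  swap
  · rw [Om0, Om0, if_neg hu, zero_mul, mul_zero]; exact zero_le
  have huv := (split_iff u v).1 ⟨a, A, haA, hu, hv⟩
  have hvx := word_mem hx hxA haA hv
  have huvx := word_mem hx hxA haA huv.2.2
  have hux := word_mem hx hxA haA hu
  have hv0 : cat v x 0 = A := by
    have := hv.2.2.1
    cases v with
    | nil => simp at this
    | cons b v => rw [cat_cons_zero]; simpa using this
  have hd := distortion hRpos hH x (cat v x) (by rw [hxA, hv0]) u hux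
    (by rwa [cat_append] at huvx)
  have hwa := weight_append R u v x
  have hw : ENNReal.ofReal (weight R v.length (cat v x)) * ENNReal.ofReal (weight R u.length (cat u x))
      ≤ ENNReal.ofReal (Real.exp (C₀ * (1 - θ)⁻¹)) *
        ENNReal.ofReal (weight R (u ++ v).length (cat (u ++ v) x)) := by
    rw [hwa, ← ENNReal.ofReal_mul (weight_pos hRpos _ _ hvx).le,
      ← ENNReal.ofReal_mul (Real.exp_pos _).le]
    apply ENNReal.ofReal_le_ofReal
    calc _ ≤ _ := mul_le_mul_of_nonneg_left hd (weight_pos hRpos _ _ hvx).le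
      _ = _ := by ring
  have hpp : pp X x Set.univ (u ++ v) u.length = 1 := by simp [pp]
  simp only
  rw [hpp, Om0, if_pos hv, Om0, if_pos hu, Om0, if_pos huv.2.2, gg, if_pos (by
    rw [List.length_append]; omega), wprod_append]
  rw [show (u ++ v).length - u.length = v.length by simp]
  calc _ = (ENNReal.ofReal t)⁻¹ ^ (u ++ v).length * ENNReal.ofReal (c u.length) *
        ENNReal.ofReal (c v.length) * ipE act f (wprod s u * wprod s v) *
        (ENNReal.ofReal (weight R v.length (cat v x)) *
          ENNReal.ofReal (weight R u.length (cat u x))) := by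
        rw [List.length_append]; ring
    _ ≤ _ := mul_le_mul_right hw _
    _ = _ := by simp only [ENNReal.ofReal_one]; ring

lemma c_growth {c : ℕ → ℝ} (hc : SlowlyIncreasing c) {q : ℝ} (hq : 0 < q) (hq1 : q < 1) :
    ∃ C : ℝ, 0 ≤ C ∧ ∀ L : ℕ, L * (c L * c L) * q ^ L ≤ C := by
  obtain ⟨hpos, hmono, -, hr⟩ := hc
  have hr1 := hr 1
  let b : ℕ → ℝ := fun L => L * (c L * c L) * q ^ L
  have hlim : Tendsto (fun n => ‖b (n + 1)‖ / ‖b n‖) atTop (nhds q) := by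
    have h1 : Tendsto (fun n : ℕ => (1 + 1 / (n : ℝ)) *
        ((c (n + 1) / c n) * (c (n + 1) / c n)) * q) atTop (nhds ((1 + 0) * (1 * 1) * q)) :=
      ((tendsto_const_nhds.add tendsto_one_div_atTop_nhds_zero_nat).mul (hr1.mul hr1)).mul_const q
    rw [show (1 + 0 : ℝ) * (1 * 1) * q = q by ring] at h1
    refine h1.congr' ?_
    filter_upwards [eventually_ge_atTop 1] with n hn
    have hb : ∀ n, 0 ≤ b n := fun n => by
      have := hpos n
      simp only [b]; positivity
    rw [Real.norm_of_nonneg (hb _), Real.norm_of_nonneg (hb _)]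
    have h2 := hpos n
    have h3 : (0 : ℝ) < n := by exact_mod_cast hn
    simp only [b]
    push_cast
    field_simp
    ring
  have hs : Summable b := by
    refine summable_of_ratio_test_tendsto_lt_one hq1 ?_ hlim
    filter_upwards [eventually_ge_atTop 1] with n hn
    have h2 := hpos n
    have h3 : (0 : ℝ) < n := by exact_mod_cast hn
    simp only [b]
    positivity
  obtain ⟨C, hC⟩ := hs.tendsto_atTop_zero.bddAbove_range
  refine ⟨max C 0, le_max_right _ _, fun L => le_max_of_le_left (hC ⟨L, rfl⟩)⟩

lemma MM_lt_top (act : G → I → I) (τ : W → W → Prop) (R : (ℕ → W) → ℝ) (s : W → G)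
    (A a : W) (x : ℕ → W) (X : ℤ → W) (f : I → ℝ≥0∞) {c : ℕ → ℝ} (hc : SlowlyIncreasing c)
    {t t' : ℝ} (ht' : 0 < t') (htt : t' < t)
    (hfin : (⨆ N, innerE (convE act (phiLeC τ R s A a x (fun _ => 1) t' N) f) f) < ⊤) :
    MM act τ R s A a x X f c t Set.univ < ⊤ := by
  have ht : 0 < t := ht'.trans htt
  obtain ⟨C, hC0, hC⟩ := c_growth hc (q := t' / t) (by positivity) ((div_lt_one ht).2 htt)
  rw [iSup_inner] at hfin
  refine lt_of_le_of_lt ?_ (ENNReal.mul_lt_top (ENNReal.ofReal_lt_top (r := C)) hfin)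
  unfold MM
  rw [← ENNReal.tsum_mul_left]
  refine ENNReal.tsum_le_tsum fun w => ?_
  rw [ENNReal.tsum_mul_left]
  have hg : ∑' m, gg c w.length m * pp X x Set.univ w m ≤
      ENNReal.ofReal (w.length * (c w.length * c w.length)) := by
    rw [tsum_eq_sum (s := Finset.range w.length)]
    · refine (Finset.sum_le_card_nsmul _ _
        (ENNReal.ofReal (c w.length) * ENNReal.ofReal (c w.length)) ?_).trans (le_of_eq ?_)
      · intro m _
        refine (mul_le_of_le_one_right' (pp_le _ _ _ _ _)).trans ?_
        unfold gg
        split_ifs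
        · exact mul_le_mul' (ENNReal.ofReal_le_ofReal (hc.2.1 (by omega)))
            (ENNReal.ofReal_le_ofReal (hc.2.1 (by omega)))
        · exact zero_le
      · rw [Finset.card_range, nsmul_eq_mul, ENNReal.ofReal_mul (by positivity),
          ENNReal.ofReal_mul (hc.1 _).le]
        simp
    · intro m hm
      rw [Finset.mem_range] at hm
      rw [gg, if_neg (by omega), zero_mul]
  refine (mul_le_mul_right hg _).trans ?_
  unfold Om0
  split_ifs
  · have key : (ENNReal.ofReal t)⁻¹ ^ w.length *
        ENNReal.ofReal (w.length * (c w.length * c w.length)) ≤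
        ENNReal.ofReal C * (ENNReal.ofReal t')⁻¹ ^ w.length := by
      rw [← ENNReal.ofReal_inv_of_pos ht, ← ENNReal.ofReal_inv_of_pos ht',
        ← ENNReal.ofReal_pow (by positivity), ← ENNReal.ofReal_pow (by positivity),
        ← ENNReal.ofReal_mul (by positivity), ← ENNReal.ofReal_mul hC0]
      apply ENNReal.ofReal_le_ofReal
      have h1 := hC w.length
      rw [div_pow] at h1
      have h2 : 0 < t' ^ w.length := by positivity
      have h3 : 0 < t ^ w.length := by positivity
      rw [inv_pow, inv_pow, ← div_eq_mul_inv, le_div_iff₀ h2]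
      calc _ = _ := by field_simp
        _ ≤ _ := h1
    calc _ = ENNReal.ofReal (weight R w.length (cat w x)) * ipE act f (wprod s w) *
          ((ENNReal.ofReal t)⁻¹ ^ w.length *
            ENNReal.ofReal (w.length * (c w.length * c w.length))) := by
          simp only [ENNReal.ofReal_one]; ring
      _ ≤ _ := mul_le_mul_right key _
      _ = _ := by simp only [ENNReal.ofReal_one]; ring
  · simp

lemma tsum_list_pow [Fintype W] (q : ℝ≥0∞) :
    ∑' w : List W, q ^ w.length = ∑' n : ℕ, ((Fintype.card W : ℝ≥0∞) * q) ^ n := by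
  rw [← (Equiv.sigmaFiberEquiv (List.length : List W → ℕ)).tsum_eq, ENNReal.tsum_sigma']
  refine tsum_congr fun n => ?_
  have h1 : ∀ w : {w : List W // w.length = n},
      q ^ ((Equiv.sigmaFiberEquiv (List.length : List W → ℕ)) ⟨n, w⟩).length = q ^ n := by
    rintro ⟨w, rfl⟩
    rfl
  rw [tsum_congr h1]
  have h2 : (∑' _ : List.Vector W n, q ^ n) = (Fintype.card W * q) ^ n := by
    rw [tsum_fintype, Finset.sum_const, Finset.card_univ, card_vector, nsmul_eq_mul, mul_pow]
    push_cast; rfl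
  exact h2

lemma gamma_set_nonempty [Fintype W] (act : G → I → I) (hact1 : ∀ i, act 1 i = i)
    (hactm : ∀ g h i, act (g * h) i = act g (act h i)) {τ : W → W → Prop}
    {R : (ℕ → W) → ℝ} (s : W → G)
    {A a : W} {x : ℕ → W} (f : I → ℝ≥0∞) (hf : MemL2 f)
    (hRpos : ∀ x ∈ SigmaPlus τ, 0 < R x) {C₀ θ : ℝ} (hH : LocallyHolder τ R C₀ θ)
    (hx : x ∈ SigmaPlus τ) (hxA : x 0 = A) (haA : τ a A) :
    ∃ T : ℝ, 0 < T ∧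
      (⨆ N, innerE (convE act (phiLeC τ R s A a x (fun _ => 1) T N) f) f) < ⊤ := by
  obtain ⟨b, hb, hRb⟩ := R_bdd hRpos hH
  refine ⟨2 * b * (Fintype.card W + 1), by positivity, ?_⟩
  set T : ℝ := 2 * b * (Fintype.card W + 1) with hT
  have hT0 : 0 < T := by positivity
  rw [iSup_inner]
  have h1 : ∑' w : List W, Om0 τ R A a x (fun _ => 1) T w * ipE act f (wprod s w) ≤
      ∑' w : List W, (ENNReal.ofReal (b / T)) ^ w.length * (2 * normSqE f) := by
    refine ENNReal.tsum_le_tsum fun w => mul_le_mul' ?_ (ipE_le act hact1 hactm f _)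
    unfold Om0
    split_ifs with hw
    · rw [ENNReal.ofReal_one, mul_one, ← ENNReal.ofReal_inv_of_pos hT0,
        ← ENNReal.ofReal_pow (by positivity), ← ENNReal.ofReal_pow (by positivity),
        ← ENNReal.ofReal_mul (by positivity)]
      apply ENNReal.ofReal_le_ofReal
      rw [div_eq_mul_inv, mul_pow, mul_comm]
      exact mul_le_mul_of_nonneg_right (weight_le hRpos hRb _ _ (word_mem hx hxA haA hw))
        (by positivity)
    · exact zero_le
  refine h1.trans_lt ?_
  rw [ENNReal.tsum_mul_right, tsum_list_pow]
  refine ENNReal.mul_lt_top ?_ (ENNReal.mul_lt_top (by simp) hf)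
  have h2 : (Fintype.card W : ℝ≥0∞) * ENNReal.ofReal (b / T) ≤ 2⁻¹ := by
    rw [← ENNReal.ofReal_natCast, ← ENNReal.ofReal_mul (by positivity)]
    rw [show (2⁻¹ : ℝ≥0∞) = ENNReal.ofReal (2⁻¹) by
      rw [ENNReal.ofReal_inv_of_pos (by norm_num)]; norm_num]
    apply ENNReal.ofReal_le_ofReal
    rw [hT, ← mul_div_assoc, div_le_iff₀ (by positivity)]
    nlinarith
  calc _ ≤ ∑' n : ℕ, (2⁻¹ : ℝ≥0∞) ^ n := ENNReal.tsum_le_tsum fun n => by gcongr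
    _ = 2 := by simpa using ENNReal.tsum_geometric_two
    _ < ⊤ := by simp

end Main

/-- (Theorem `theorem:shiftinv`.) Any weak* accumulation point,
along `t_k ↓ γ(f)`, of the weak* limits `μ_c[t]` of the approximating measures
`μ_{c;N}[t]` is shift invariant. -/
theorem statement16 {W G J : Type*} [Fintype W] [MeasurableSpace W]
    [TopologicalSpace W] [DiscreteTopology W]
    [Countable G] [Group G] [Countable J]
    (τ : W → W → Prop) (R : (ℕ → W) → ℝ) (s : W → G)
    (Hfam : J → Subgroup G)
    (hmix : Mixing τ)
    (hRpos : ∀ x ∈ SigmaPlus τ, 0 < R x)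
    (hHolder : ∃ C₀ θ : ℝ, LocallyHolder τ R C₀ θ)
    (hP0 : ∀ B : W, growthRate (Zper τ R B) = 1)
    (htrans : ExtTransitive τ s)
    (A a : W) (x : ℕ → W) (X : ℤ → W)
    (hx : x ∈ SigmaPlus τ) (hxA : x 0 = A) (hxAu : ∀ i : ℕ, 0 < i → x i ≠ A)
    (hXadm : ∀ i : ℤ, i < -1 → τ (X i) (X (i + 1))) (hXa : X (-1) = a)
    (hXau : ∀ i : ℤ, i < -1 → X i ≠ a)
    (haA : τ a A)
    (f : (Σ j, G ⧸ Hfam j) → ℝ≥0∞) (hf : MemL2 f)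
    (c : ℕ → ℝ) (hc : SlowlyIncreasing c)
    (γf : ℝ) (hγf : γf = gammaInnerC' (rhoIdx Hfam) τ R s A a x f)
    (hFinf : Tendsto (fun t => FstarVal (rhoIdx Hfam) τ R s A a x f c t)
      (nhdsWithin γf (Set.Ioi γf)) (nhds ⊤))
    (hRatio : Tendsto (fun t =>
        (⨆ N, innerE (convE (rhoIdx Hfam) (phiLeC τ R s A a x c t N) f) f) /
          FstarVal (rhoIdx Hfam) τ R s A a x f c t)
      (nhdsWithin γf (Set.Ioi γf)) (nhds 0))
    (μlim : ℝ → Measure (ℤ → W))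
    (hμlim : ∀ t : ℝ, γf < t → ∀ F : BoundedContinuousFunction (ℤ → W) ℝ,
      Tendsto (fun N => ∫ z, F z ∂ (muCN (rhoIdx Hfam) τ R s A a x X f c t N))
        atTop (nhds (∫ z, F z ∂ (μlim t))))
    (t : ℕ → ℝ) (htk : ∀ k, γf < t k) (htlim : Tendsto t atTop (nhds γf))
    (μ : Measure (ℤ → W))
    (hacc : ∀ F : BoundedContinuousFunction (ℤ → W) ℝ,
      Tendsto (fun k => ∫ z, F z ∂ (μlim (t k))) atTop (nhds (∫ z, F z ∂ μ))) :
    ∀ u : Set (ℤ → W), MeasurableSet u → μ (shiftZ ⁻¹' u) = μ u := by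
  obtain ⟨C₀, θ, hH⟩ := hHolder
  have hact1 : ∀ i, rhoIdx Hfam 1 i = i := fun i => by simp [rhoIdx]
  have hactm : ∀ g h i, rhoIdx Hfam (g * h) i = rhoIdx Hfam g (rhoIdx Hfam h i) :=
    fun g h i => by simp [rhoIdx, mul_smul]; rfl
  have hγ0 : 0 ≤ γf := by
    rw [hγf]; exact Real.sInf_nonneg fun t ht => ht.1.le
  have hMfin : ∀ t, γf < t → MM (rhoIdx Hfam) τ R s A a x X f c t Set.univ < ⊤ := by
    intro t ht
    rw [hγf] at ht
    obtain ⟨t', ⟨ht'0, ht'⟩, htt⟩ := exists_lt_of_csInf_lt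
      (gamma_set_nonempty (rhoIdx Hfam) hact1 hactm s f hf hRpos hH hx hxA haA) ht
    exact MM_lt_top (rhoIdx Hfam) τ R s A a x X f hc ht'0 htt ht'
  have hFle : ∀ t, FstarVal (rhoIdx Hfam) τ R s A a x f c t ≤
      ENNReal.ofReal (Real.exp (C₀ * (1 - θ)⁻¹)) *
        MM (rhoIdx Hfam) τ R s A a x X f c t Set.univ :=
    fun t => F_le_MM (rhoIdx Hfam) hact1 hactm s X f t hRpos hH hx hxA haA
  have hFfin : ∀ t, γf < t → FstarVal (rhoIdx Hfam) τ R s A a x f c t < ⊤ := fun t ht =>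
    (hFle t).trans_lt (ENNReal.mul_lt_top ENNReal.ofReal_lt_top (hMfin t ht))
  have htw : Tendsto t atTop (nhdsWithin γf (Set.Ioi γf)) :=
    tendsto_nhdsWithin_iff.2 ⟨htlim, Eventually.of_forall htk⟩
  have hF1 : ∀ᶠ k in atTop, 1 < FstarVal (rhoIdx Hfam) τ R s A a x f c (t k) :=
    (hFinf.comp htw).eventually (lt_mem_nhds (by simp))
  have hRat := hRatio.comp htw
  -- normalised limit masses
  set Q : ℕ → Set (ℤ → W) → ℝ≥0∞ := fun k S =>
    MM (rhoIdx Hfam) τ R s A a x X f c (t k) S / FstarVal (rhoIdx Hfam) τ R s A a x f c (t k)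
    with hQ
  have hMmono : ∀ t S, MM (rhoIdx Hfam) τ R s A a x X f c t S ≤
      MM (rhoIdx Hfam) τ R s A a x X f c t Set.univ := by
    intro t S
    unfold MM
    refine ENNReal.tsum_le_tsum fun w => ENNReal.tsum_le_tsum fun m => ?_
    refine mul_le_mul_right (mul_le_mul_right ?_ _) _
    have : pp X x Set.univ w m = 1 := by simp [pp]
    rw [this]
    exact pp_le _ _ _ _ _
  have hQfin : ∀ᶠ k in atTop, ∀ S, Q k S < ⊤ := by
    filter_upwards [hF1] with k hk S
    exact ENNReal.div_lt_top ((hMmono _ S).trans_lt (hMfin _ (htk k))).ne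
      (zero_lt_one.trans hk).ne'
  have hlim : ∀ S : Set (ℤ → W), MeasurableSet S → IsClopen S →
      Tendsto (fun k => (Q k S).toReal) atTop (nhds (μ.real S)) := by
    intro S hS hcl
    have hint : ∀ ν : Measure (ℤ → W),
        ∫ z, BoundedContinuousFunction.indicator S hcl z ∂ν = ν.real S := by
      intro ν
      have : (fun z => BoundedContinuousFunction.indicator S hcl z) =
          S.indicator (1 : (ℤ → W) → ℝ) := by
        ext z; simp [BoundedContinuousFunction.indicator]
      rw [this]
      exact integral_indicator_one hS
    have h1 := hacc (BoundedContinuousFunction.indicator S hcl)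
    simp_rw [hint] at h1
    refine h1.congr' ?_
    filter_upwards [hQfin] with k hk
    have h2 := hμlim (t k) (htk k) (BoundedContinuousFunction.indicator S hcl)
    simp_rw [hint] at h2
    have h3 := muCN_tendsto (rhoIdx Hfam) s X f (t k) hRpos hx hxA haA hc.1 S hS
    have h4 := (ENNReal.tendsto_toReal (hk S).ne).comp h3
    exact tendsto_nhds_unique h2 h4
  -- finiteness of `μ`
  have hfinite : IsFiniteMeasure μ := by
    refine ⟨lt_top_iff_ne_top.2 fun htop => ?_⟩
    have h1 := hlim Set.univ MeasurableSet.univ isClopen_univ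
    have h0 : μ.real Set.univ = 0 := by simp [Measure.real, htop]
    rw [h0] at h1
    have hE := Real.exp_pos (C₀ * (1 - θ)⁻¹)
    have h2 : ∀ᶠ k in atTop, (Real.exp (C₀ * (1 - θ)⁻¹))⁻¹ ≤ (Q k Set.univ).toReal := by
      filter_upwards [hF1, hQfin] with k hk hk2
      have h3 : ENNReal.ofReal ((Real.exp (C₀ * (1 - θ)⁻¹))⁻¹) ≤ Q k Set.univ := by
        simp only [hQ]
        rw [ENNReal.le_div_iff_mul_le (Or.inl (zero_lt_one.trans hk).ne')
          (Or.inl (hFfin _ (htk k)).ne), ENNReal.ofReal_inv_of_pos hE]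
        rw [mul_comm, ← div_eq_mul_inv]
        exact ENNReal.div_le_of_le_mul' (hFle _)
      rw [← ENNReal.toReal_ofReal (inv_pos.2 hE).le]
      exact ENNReal.toReal_mono (hk2 _).ne h3
    have h4 := ge_of_tendsto h1 h2
    have := inv_pos.2 hE
    linarith
  -- near invariance
  have hshiftM : Measurable (shiftZ : (ℤ → W) → (ℤ → W)) :=
    measurable_pi_lambda _ fun i => measurable_pi_apply _
  have hshiftC : Continuous (shiftZ : (ℤ → W) → (ℤ → W)) :=
    continuous_pi fun i => continuous_apply _
  have hratio : ∀ ε : ℝ, 0 < ε → ∃ K : ℕ, 1 ≤ K ∧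
      ∀ n, K ≤ n → c (n + 1) ≤ (1 + ε) * c n := by
    intro ε hε
    have h1 := (hc.2.2.2 1).eventually (gt_mem_nhds (show (1 : ℝ) < 1 + ε by linarith))
    obtain ⟨K, hK⟩ := eventually_atTop.1 h1
    refine ⟨K + 1, by omega, fun n hn => ?_⟩
    have := hK n (by omega)
    rw [div_lt_iff₀ (hc.1 n)] at this
    exact this.le
  have hlimit : ∀ S S' : Set (ℤ → W), MeasurableSet S → IsClopen S → MeasurableSet S' →
      IsClopen S' → (∀ ε : ℝ, 0 < ε → ∀ K : ℕ, 1 ≤ K →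
        (∀ n, K ≤ n → c (n + 1) ≤ (1 + ε) * c n) → ∀ t,
        MM (rhoIdx Hfam) τ R s A a x X f c t S ≤
          ENNReal.ofReal (1 + ε) * MM (rhoIdx Hfam) τ R s A a x X f c t S' +
          K * ENNReal.ofReal (c K) *
            ⨆ N, innerE (convE (rhoIdx Hfam) (phiLeC τ R s A a x c t N) f) f) →
      μ.real S ≤ μ.real S' := by
    intro S S' hS hSc hS' hSc' hle
    have key : ∀ ε : ℝ, 0 < ε → μ.real S ≤ (1 + ε) * μ.real S' := by
      intro ε hε
      obtain ⟨K, hK1, hK⟩ := hratio ε hε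
      have hRatR := (ENNReal.tendsto_toReal ENNReal.zero_ne_top).comp hRat
      have hup : Tendsto (fun k => (1 + ε) * (Q k S').toReal + K * c K *
          ((⨆ N, innerE (convE (rhoIdx Hfam) (phiLeC τ R s A a x c (t k) N) f) f) /
          FstarVal (rhoIdx Hfam) τ R s A a x f c (t k)).toReal) atTop
          (nhds ((1 + ε) * μ.real S' + K * c K * (0 : ℝ≥0∞).toReal)) :=
        ((hlim S' hS' hSc').const_mul _).add (hRatR.const_mul _)
      rw [ENNReal.toReal_zero, mul_zero, add_zero] at hup
      refine le_of_tendsto_of_tendsto (hlim S hS hSc) hup ?_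
      have hRf : ∀ᶠ k in atTop, ((⨆ N, innerE (convE (rhoIdx Hfam)
          (phiLeC τ R s A a x c (t k) N) f) f) /
          FstarVal (rhoIdx Hfam) τ R s A a x f c (t k)) < ⊤ :=
        hRat.eventually (gt_mem_nhds (by simp))
      filter_upwards [hQfin, hRf] with k hk hkR
      have h1 := ENNReal.div_le_div_right (hle ε hε K hK1 hK (t k))
        (FstarVal (rhoIdx Hfam) τ R s A a x f c (t k))
      rw [ENNReal.add_div, mul_div_assoc, mul_div_assoc] at h1
      have hA : ENNReal.ofReal (1 + ε) * Q k S' ≠ ⊤ :=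
        ENNReal.mul_ne_top ENNReal.ofReal_ne_top (hk S').ne
      have hB := ENNReal.mul_ne_top (ENNReal.mul_ne_top (ENNReal.natCast_ne_top K)
        (ENNReal.ofReal_ne_top (r := c K))) hkR.ne
      have h2 := ENNReal.toReal_mono (ENNReal.add_ne_top.2 ⟨hA, hB⟩) h1
      rw [ENNReal.toReal_add hA hB, ENNReal.toReal_mul, ENNReal.toReal_mul, ENNReal.toReal_mul,
        ENNReal.toReal_ofReal (by linarith), ENNReal.toReal_ofReal (hc.1 K).le,
        ENNReal.toReal_natCast] at h2
      exact h2
    have hcont : Tendsto (fun ε : ℝ => (1 + ε) * μ.real S') (nhdsWithin 0 (Set.Ioi 0))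
        (nhds ((1 + 0) * μ.real S')) :=
      tendsto_nhdsWithin_of_tendsto_nhds
        (Continuous.tendsto (by fun_prop) 0)
    have h5 := ge_of_tendsto hcont (eventually_nhdsWithin_of_forall fun ε hε => key ε hε)
    simpa using h5
  have hcyl : ∀ S : Set (ℤ → W), MeasurableSet S → IsClopen S →
      μ (shiftZ ⁻¹' S) = μ S := by
    intro S hS hSc
    have hS' : MeasurableSet (shiftZ ⁻¹' S) := hshiftM hS
    have hSc' : IsClopen (shiftZ ⁻¹' S) := hSc.preimage hshiftC
    have h1 := hlimit _ _ hS' hSc' hS hSc (fun ε hε K hK1 hK t =>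
      MM_shift_le (rhoIdx Hfam) τ R s A a x X f t S hc.1 hc.2.1 hε.le hK1 hK)
    have h2 := hlimit _ _ hS hSc hS' hSc' (fun ε hε K hK1 hK t =>
      MM_le_shift (rhoIdx Hfam) τ R s A a x X f t S hc.1 hc.2.1 hε.le hK1 hK)
    have h3 := le_antisymm h1 h2
    exact (ENNReal.toReal_eq_toReal_iff' (measure_ne_top _ _) (measure_ne_top _ _)).1 h3
  have hmap : μ.map shiftZ = μ := by
    have : IsFiniteMeasure (μ.map shiftZ) := Measure.isFiniteMeasure_map μ _
    refine ext_of_generate_finite (measurableCylinders fun _ : ℤ => W)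
      generateFrom_measurableCylinders.symm isPiSystem_measurableCylinders ?_ ?_
    · intro S hS
      obtain ⟨I, B, hB, rfl⟩ := (mem_measurableCylinders _).1 hS
      have hm : MeasurableSet (cylinder I B) := MeasurableSet.cylinder (α := fun _ : ℤ => W) I hB
      rw [Measure.map_apply hshiftM hm]
      refine hcyl _ hm ?_
      exact (isClopen_discrete B).preimage (by fun_prop)
    · rw [Measure.map_apply hshiftM MeasurableSet.univ]; rfl
  intro u hu
  rw [← Measure.map_apply hshiftM hu, hmap]

end CMS
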